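/- Let 0 ≤ α < 1, β ∈ (−π/2, π/2), and let f ∈ Σ with inverse extension g satisfy Re(e^{iβ} z f'(z)/f(z)) > α·cos β for all z ∈ U \ {0} and Re(e^{iβ} w g'(w)/g(w)) > α·cos β for all w ∈ U \ {0}. Then |a₂| ≤ √(2(1−α)cos β) and |a₃| ≤ 2(1−α)cos β, where a₂ = f''(0)/2 and a₃ = f'''(0)/6. -/

import Mathlib

open Metric Real Complex

/-!
The quotient `p z = z * f' z / f z` extends holomorphically to the disk: it has no pole there, since
near a simple pole the real part of `exp (I * β) * p` would be unbounded below. Carathéodory's bound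
for functions with real part bounded below, `|pₙ| ≤ 2 * (1 - α) * cos β`, applied to the quadratic
coefficient gives `|2 * a₃ - a₂ ^ 2| ≤ 2 * (1 - α) * cos β`. The inverse `g` has coefficients `-a₂`
and `2 * a₂ ^ 2 - a₃`, so its bound reads `|3 * a₂ ^ 2 - 2 * a₃| ≤ 2 * (1 - α) * cos β`, and both
claims are triangle inequalities for combinations of these two.

Carathéodory's bound comes from averaging over circles: for `n ≠ 0` the average of
`(z - c)⁻ⁿ * conj (P z)` vanishes, so in Cauchy's formula for the `n`-th coefficient `P` may be
replaced by `2 * re P`, whose sign is known.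
-/

open Filter Topology ComplexConjugate

section CircleAverage

variable {c : ℂ} {r : ℝ} {n : ℕ}

lemma norm_circleAverage_le_circleAverage_norm {E : Type*} [NormedAddCommGroup E]
    [NormedSpace ℝ E] (f : ℂ → E) (c : ℂ) (r : ℝ) :
    ‖circleAverage f c r‖ ≤ circleAverage (fun z ↦ ‖f z‖) c r := by
  rw [circleAverage, circleAverage, norm_smul, smul_eq_mul,
    Real.norm_of_nonneg (inv_nonneg.2 two_pi_pos.le)]
  gcongr
  exact intervalIntegral.norm_integral_le_integral_norm two_pi_pos.le

variable {P : ℂ → ℂ}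

lemma circleAverage_inv_sub_pow_mul (hr : 0 < r) (hP : DiffContOnCl ℂ P (ball c r)) (n : ℕ) :
    circleAverage (fun z ↦ ((z - c) ^ n)⁻¹ * P z) c r = iteratedDeriv n P c / n.factorial := by
  have cauchy := hP.circleIntegral_one_div_sub_center_pow_smul hr n
  rw [circleAverage_eq_circleIntegral hr.ne']
  have integrand_eq (z : ℂ) : (z - c)⁻¹ • (((z - c) ^ n)⁻¹ * P z) =
      (1 / (z - c) ^ (n + 1)) • P z := by
    simp only [smul_eq_mul, pow_succ', one_div, mul_inv, mul_assoc]
  simp only [integrand_eq]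
  rw [cauchy, smul_smul, ← mul_div_assoc, inv_mul_cancel₀ two_pi_I_ne_zero, smul_eq_mul]
  ring

lemma circleAverage_sub_pow_mul_eq_zero (hr : 0 < r) (hP : DiffContOnCl ℂ P (ball c r))
    (hn : n ≠ 0) : circleAverage (fun z ↦ (z - c) ^ n * P z) c r = 0 := by
  have hpow : DiffContOnCl ℂ (fun z ↦ (z - c) ^ n) (ball c r) :=
    Differentiable.diffContOnCl (by fun_prop)
  have mean_value : circleAverage (fun z ↦ (z - c) ^ n • P z) c r = (c - c) ^ n • P c :=
    DiffContOnCl.circleAverage (by rw [abs_of_pos hr]; exact hpow.smul hP)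
  simpa [hn] using mean_value

lemma circleAverage_inv_sub_pow_mul_conj_eq_zero (hr : 0 < r)
    (hP : DiffContOnCl ℂ P (ball c r)) (hn : n ≠ 0) :
    circleAverage (fun z ↦ ((z - c) ^ n)⁻¹ * conj (P z)) c r = 0 := by
  have on_circle : Set.EqOn (fun z ↦ ((z - c) ^ n)⁻¹ * conj (P z))
      (fun z ↦ ((r : ℂ) ^ (2 * n))⁻¹ • conjCLE ((z - c) ^ n * P z)) (sphere c |r|) := by
    intro z hz
    have hzr : ‖z - c‖ = r := by simpa [abs_of_pos hr, dist_eq_norm] using hz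
    have hzc : z - c ≠ 0 := norm_pos_iff.1 (hzr ▸ hr)
    have hsq : (r : ℂ) ^ (2 * n) = (z - c) ^ n * conj ((z - c) ^ n) := by
      rw [Complex.mul_conj, normSq_eq_norm_sq, norm_pow, hzr]
      push_cast
      ring
    have hconj : conj ((z - c) ^ n) ≠ 0 := (map_ne_zero _).2 (pow_ne_zero n hzc)
    simp only [conjCLE_apply, map_mul, smul_eq_mul, hsq]
    field_simp
  have integrable : CircleIntegrable (fun z ↦ (z - c) ^ n * P z) c r := by
    refine ContinuousOn.circleIntegrable hr.le (ContinuousOn.mul (by fun_prop) ?_)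
    exact hP.continuousOn_ball.mono sphere_subset_closedBall
  have conj_average := conjCLE.toContinuousLinearMap.circleAverage_comp_comm integrable
  rw [circleAverage_sub_pow_mul_eq_zero hr hP hn, map_zero] at conj_average
  rw [circleAverage_congr_sphere on_circle, circleAverage_fun_smul]
  exact (congrArg _ conj_average).trans (smul_zero _)

lemma circleAverage_inv_sub_pow_mul_re (hr : 0 < r) (hP : DiffContOnCl ℂ P (ball c r))
    (hn : n ≠ 0) :
    circleAverage (fun z ↦ ((z - c) ^ n)⁻¹ * (2 * (P z).re : ℝ)) c r =
      iteratedDeriv n P c / n.factorial := by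
  have hcont : ContinuousOn P (sphere c r) := hP.continuousOn_ball.mono sphere_subset_closedBall
  have hinv : ContinuousOn (fun z ↦ ((z - c) ^ n)⁻¹) (sphere c r) := by
    refine ContinuousOn.inv₀ (by fun_prop) fun z hz ↦ pow_ne_zero _ ?_
    exact sub_ne_zero.2 (ne_of_mem_sphere hz hr.ne')
  have split : (fun z ↦ ((z - c) ^ n)⁻¹ * ((2 * (P z).re : ℝ) : ℂ)) =
      fun z ↦ ((z - c) ^ n)⁻¹ * P z + ((z - c) ^ n)⁻¹ * conj (P z) := by
    funext z
    rw [← mul_add, Complex.add_conj]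
  have hint : CircleIntegrable (fun z ↦ ((z - c) ^ n)⁻¹ * P z) c r :=
    (hinv.mul hcont).circleIntegrable hr.le
  have hint_conj : CircleIntegrable (fun z ↦ ((z - c) ^ n)⁻¹ * conj (P z)) c r :=
    (hinv.mul (continuous_conj.comp_continuousOn hcont)).circleIntegrable hr.le
  rw [split, circleAverage_fun_add hint hint_conj, circleAverage_inv_sub_pow_mul hr hP,
    circleAverage_inv_sub_pow_mul_conj_eq_zero hr hP hn, add_zero]

end CircleAverage

section Caratheodory

variable {P : ℂ → ℂ} {c : ℂ} {m r R : ℝ} {n : ℕ}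

lemma norm_iteratedDeriv_mul_pow_le_of_re_nonneg (hr : 0 < r)
    (hP : DiffContOnCl ℂ P (ball c r)) (hn : n ≠ 0) (hre : ∀ z ∈ sphere c r, 0 ≤ (P z).re) :
    ‖iteratedDeriv n P c‖ * r ^ n ≤ 2 * n.factorial * (P c).re := by
  have on_circle : Set.EqOn (fun z ↦ ‖((z - c) ^ n)⁻¹ * ((2 * (P z).re : ℝ) : ℂ)‖)
      (fun z ↦ (2 / r ^ n) • (reCLM ∘ P) z) (sphere c |r|) := by
    intro z hz
    rw [abs_of_pos hr] at hz
    have hzr : ‖z - c‖ = r := by simpa [dist_eq_norm] using hz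
    have := hre z hz
    simp only [norm_mul, norm_inv, norm_pow, hzr, norm_real, Function.comp_apply, reCLM_apply,
      smul_eq_mul, Real.norm_of_nonneg (mul_nonneg zero_le_two this)]
    ring
  have re_average : circleAverage (reCLM ∘ P) c r = (P c).re := by
    rw [reCLM.circleAverage_comp_comm
      ((hP.continuousOn_ball.mono sphere_subset_closedBall).circleIntegrable hr.le),
      DiffContOnCl.circleAverage (by rwa [abs_of_pos hr]), reCLM_apply]
  have coeff_le : ‖iteratedDeriv n P c / n.factorial‖ ≤ 2 / r ^ n * (P c).re := by
    calc ‖iteratedDeriv n P c / n.factorial‖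
        = ‖circleAverage (fun z ↦ ((z - c) ^ n)⁻¹ * (2 * (P z).re : ℝ)) c r‖ := by
          rw [circleAverage_inv_sub_pow_mul_re hr hP hn]
      _ ≤ circleAverage (fun z ↦ ‖((z - c) ^ n)⁻¹ * ((2 * (P z).re : ℝ) : ℂ)‖) c r :=
          norm_circleAverage_le_circleAverage_norm _ c r
      _ = 2 / r ^ n * (P c).re := by
          rw [circleAverage_congr_sphere on_circle, circleAverage_fun_smul, re_average,
            smul_eq_mul]
  rw [norm_div, Complex.norm_natCast, div_le_iff₀ (by positivity)] at coeff_le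
  calc ‖iteratedDeriv n P c‖ * r ^ n
      ≤ 2 / r ^ n * (P c).re * n.factorial * r ^ n := by gcongr
    _ = 2 * n.factorial * (P c).re := by field_simp

theorem norm_iteratedDeriv_mul_pow_le_of_le_re (hR : 0 < R)
    (hP : DifferentiableOn ℂ P (ball c R)) (hn : n ≠ 0)
    (hre : ∀ z ∈ ball c R, z ≠ c → m ≤ (P z).re) :
    ‖iteratedDeriv n P c‖ * R ^ n ≤ 2 * n.factorial * ((P c).re - m) := by
  have smaller_radius (r : ℝ) (hr : r ∈ Set.Ioo 0 R) :
      ‖iteratedDeriv n P c‖ * r ^ n ≤ 2 * n.factorial * ((P c).re - m) := by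
    have hsub : closedBall c r ⊆ ball c R := closedBall_subset_ball hr.2
    have hPm : DiffContOnCl ℂ (fun z ↦ P z - m) (ball c r) :=
      DifferentiableOn.diffContOnCl <| by
        rw [closure_ball c hr.1.ne']
        exact (hP.mono hsub).sub_const _
    have hcoeff := norm_iteratedDeriv_mul_pow_le_of_re_nonneg hr.1 hPm hn fun z hz ↦ by
      simpa using hre z (hsub (sphere_subset_closedBall hz)) (ne_of_mem_sphere hz hr.1.ne')
    have hPc : ContDiffAt ℂ n P c :=
      (hP.analyticAt (ball_mem_nhds c hR)).contDiffAt
    simpa [iteratedDeriv_fun_sub hPc contDiffAt_const, iteratedDeriv_const, hn] using hcoeff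
  have hlim : Tendsto (fun r : ℝ ↦ ‖iteratedDeriv n P c‖ * r ^ n) (𝓝[<] R)
      (𝓝 (‖iteratedDeriv n P c‖ * R ^ n)) :=
    (Continuous.tendsto (by fun_prop) R).mono_left nhdsWithin_le_nhds
  exact le_of_tendsto hlim (eventually_of_mem (Ioo_mem_nhdsLT hR) smaller_radius)

end Caratheodory

section LogarithmicDerivative

variable {u f h : ℂ → ℂ} {z₀ : ℂ} {m : ℝ}

lemma tendsto_add_ofReal_mul_nhdsNE {d : ℂ} (hd : d ≠ 0) (z₀ : ℂ) :
    Tendsto (fun t : ℝ ↦ z₀ + t * d) (𝓝[>] 0) (𝓝[≠] z₀) := by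
  refine tendsto_nhdsWithin_iff.2 ⟨?_, ?_⟩
  · have hcont : Continuous fun t : ℝ ↦ z₀ + t * d := by fun_prop
    simpa using (hcont.tendsto 0).mono_left nhdsWithin_le_nhds
  · filter_upwards [self_mem_nhdsWithin] with t ht
    simpa [hd] using (Set.mem_Ioi.1 ht).ne'

lemma exists_eventuallyEq_div_pow_of_meromorphicOrderAt_neg (hu : MeromorphicAt u z₀)
    (hneg : meromorphicOrderAt u z₀ < 0) :
    ∃ k : ℕ, 0 < k ∧ ∃ φ : ℂ → ℂ, AnalyticAt ℂ φ z₀ ∧ φ z₀ ≠ 0 ∧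
      ∀ᶠ z in 𝓝[≠] z₀, u z = φ z / (z - z₀) ^ k := by
  obtain ⟨k, hk, horder⟩ : ∃ k : ℕ, 0 < k ∧ meromorphicOrderAt u z₀ = (-k : ℤ) := by
    obtain ⟨j, hj⟩ := WithTop.ne_top_iff_exists.1 hneg.ne_top
    rw [← hj] at hneg ⊢
    have hj_neg : j < 0 := by exact_mod_cast hneg
    obtain ⟨k, rfl⟩ := Int.exists_eq_neg_ofNat hj_neg.le
    exact ⟨k, by omega, rfl⟩
  obtain ⟨φ, hφ, hφ₀, hu_eq⟩ := (meromorphicOrderAt_eq_int_iff hu).1 horder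
  refine ⟨k, hk, φ, hφ, hφ₀, hu_eq.mono fun z hz ↦ ?_⟩
  rw [hz, zpow_neg, zpow_natCast, smul_eq_mul, inv_mul_eq_div]

-- Near a pole `u z ≈ a / (z - z₀) ^ k`; along the ray `z = z₀ + t * d` with `d ^ k = -a` this is
-- `-1 / t ^ k`.
lemma meromorphicOrderAt_nonneg_of_le_re (hu : MeromorphicAt u z₀)
    (hre : ∀ᶠ z in 𝓝[≠] z₀, m ≤ (u z).re) : 0 ≤ meromorphicOrderAt u z₀ := by
  by_contra! hneg
  obtain ⟨k, hk, φ, hφ, hφ₀, hu_eq⟩ :=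
    exists_eventuallyEq_div_pow_of_meromorphicOrderAt_neg hu hneg
  obtain ⟨d, hd⟩ := IsAlgClosed.exists_pow_nat_eq (-φ z₀) hk
  have hd₀ : d ≠ 0 := by
    rintro rfl
    simp [hk.ne', hφ₀, eq_comm] at hd
  have ray := tendsto_add_ofReal_mul_nhdsNE hd₀ z₀
  have leading_term : Tendsto (fun t : ℝ ↦ (φ (z₀ + t * d) / d ^ k).re) (𝓝[>] 0) (𝓝 (-1)) := by
    have hφ_ray := hφ.continuousAt.tendsto.comp (ray.mono_right nhdsWithin_le_nhds)
    have hlim := (continuous_re.tendsto _).comp (hφ_ray.div_const (d ^ k))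
    rwa [hd, div_neg, div_self hφ₀, ← hd, neg_re, one_re] at hlim
  have lower_bound : Tendsto (fun t : ℝ ↦ t ^ k * m) (𝓝[>] 0) (𝓝 0) := by
    have hcont : Continuous fun t : ℝ ↦ t ^ k * m := by fun_prop
    simpa [hk.ne'] using (hcont.tendsto 0).mono_left nhdsWithin_le_nhds
  have zero_le : (0 : ℝ) ≤ -1 := by
    refine le_of_tendsto_of_tendsto lower_bound leading_term ?_
    filter_upwards [ray.eventually hre, ray.eventually hu_eq, self_mem_nhdsWithin]
      with t hle heq ht
    have ht₀ : 0 < t := ht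
    have rescale : φ (z₀ + t * d) / d ^ k = (t ^ k : ℝ) * u (z₀ + t * d) := by
      have : (t : ℂ) ≠ 0 := mod_cast ht₀.ne'
      rw [heq, add_sub_cancel_left, mul_pow]
      push_cast
      field_simp
    rw [rescale, re_ofReal_mul]
    gcongr
  norm_num at zero_le

lemma ne_zero_of_le_re_mul_logDeriv (hf : AnalyticAt ℂ f z₀) (hf₀ : ¬∀ᶠ z in 𝓝 z₀, f z = 0)
    (hh : AnalyticAt ℂ h z₀) (hh₀ : h z₀ ≠ 0)
    (hre : ∀ᶠ z in 𝓝[≠] z₀, m ≤ (h z * logDeriv f z).re) : f z₀ ≠ 0 := by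
  intro hzero
  have order_h : meromorphicOrderAt h z₀ = 0 := by
    rw [hh.meromorphicOrderAt_eq, hh.analyticOrderAt_eq_zero.2 hh₀]
    rfl
  have order_logDeriv : meromorphicOrderAt (logDeriv f) z₀ = -1 := by
    refine meromorphicOrderAt_logDeriv_eq_neg_one hf.meromorphicAt ?_ ?_
    · simpa [hf.meromorphicOrderAt_eq, hf.analyticOrderAt_eq_zero] using hzero
    · simpa [hf.meromorphicOrderAt_eq, analyticOrderAt_eq_top] using hf₀
  have order_mul : meromorphicOrderAt (h * logDeriv f) z₀ = -1 := by
    rw [meromorphicOrderAt_mul hh.meromorphicAt hf.meromorphicAt.logDeriv, order_h,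
      order_logDeriv, zero_add]
  have order_nonneg := meromorphicOrderAt_nonneg_of_le_re
    (hh.meromorphicAt.mul hf.meromorphicAt.logDeriv) hre
  rw [order_mul] at order_nonneg
  exact absurd order_nonneg (by decide)

end LogarithmicDerivative

/-- The quotient `z f'(z) / f(z)` of a function vanishing at the origin, with its removable
singularity filled in: `dslope f 0 z` is `f z / z` for `z ≠ 0` and `deriv f 0` for `z = 0`. -/
noncomputable def starlikeQuotient (f : ℂ → ℂ) (z : ℂ) : ℂ := deriv f z / dslope f 0 z

section StarlikeQuotient

variable {f : ℂ → ℂ} {z : ℂ}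

lemma starlikeQuotient_of_ne_zero (hf₀ : f 0 = 0) (hz : z ≠ 0) :
    starlikeQuotient f z = z * deriv f z / f z := by
  rw [starlikeQuotient, dslope_of_ne f hz, slope_def_field, hf₀, sub_zero, sub_zero,
    div_div_eq_mul_div, mul_comm]

lemma starlikeQuotient_zero (hf₁ : deriv f 0 = 1) : starlikeQuotient f 0 = 1 := by
  rw [starlikeQuotient, dslope_same, hf₁, div_one]

lemma dslope_zero_ne_zero (hf₀ : f 0 = 0) (hf₁ : deriv f 0 = 1) (hz : z ≠ 0 → f z ≠ 0) :
    dslope f 0 z ≠ 0 := by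
  rcases eq_or_ne z 0 with rfl | hz₀
  · simp [hf₁]
  · simpa [dslope_of_ne f hz₀, slope_def_field, hf₀, hz₀] using hz hz₀

lemma differentiableOn_starlikeQuotient {s : Set ℂ} (hs : IsOpen s) (h0 : 0 ∈ s)
    (hf : DifferentiableOn ℂ f s) (hf₀ : f 0 = 0) (hf₁ : deriv f 0 = 1)
    (hne : ∀ z ∈ s, z ≠ 0 → f z ≠ 0) : DifferentiableOn ℂ (starlikeQuotient f) s :=
  (hf.deriv hs).div ((differentiableOn_dslope (hs.mem_nhds h0)).2 hf)
    fun z hz ↦ dslope_zero_ne_zero hf₀ hf₁ (hne z hz)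

lemma iteratedDeriv_two_starlikeQuotient (hf : AnalyticAt ℂ f 0) (hf₀ : f 0 = 0)
    (hf₁ : deriv f 0 = 1) :
    iteratedDeriv 2 (starlikeQuotient f) 0 =
      4 * (iteratedDeriv 3 f 0 / 6) - 2 * (iteratedDeriv 2 f 0 / 2) ^ 2 := by
  have hdslope : AnalyticAt ℂ (dslope f 0) 0 :=
    let ⟨_, hseries⟩ := hf
    hseries.has_fpower_series_dslope_fslope.analyticAt
  have hdslope₀ : dslope f 0 0 ≠ 0 := by simp [hf₁]
  have hp : AnalyticAt ℂ (starlikeQuotient f) 0 := hf.deriv.div hdslope hdslope₀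
  have hprod : f * starlikeQuotient f =ᶠ[𝓝 0] id * deriv f := by
    filter_upwards [hdslope.continuousAt.eventually_ne hdslope₀] with z hz
    have hfz : f z = z * dslope f 0 z := by simpa [hf₀] using (sub_smul_dslope f 0 z).symm
    simp only [Pi.mul_apply, id_eq, starlikeQuotient, hfz]
    field_simp
  have leibniz (k : ℕ) := hprod.iteratedDeriv_eq k
  simp only [iteratedDeriv_mul hf.contDiffAt hp.contDiffAt,
    iteratedDeriv_mul contDiffAt_id hf.deriv.contDiffAt] at leibniz
  have second : 2 * deriv (starlikeQuotient f) 0 + iteratedDeriv 2 f 0 =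
      2 * iteratedDeriv 2 f 0 := by
    simpa [Finset.sum_range_succ, iteratedDeriv_id, hf₀, hf₁, starlikeQuotient_zero hf₁,
      iteratedDeriv_one, ← iteratedDeriv_succ'] using leibniz 2
  have third : 3 * iteratedDeriv 2 (starlikeQuotient f) 0 +
      3 * iteratedDeriv 2 f 0 * deriv (starlikeQuotient f) 0 + iteratedDeriv 3 f 0 =
      3 * iteratedDeriv 3 f 0 := by
    simpa [Finset.sum_range_succ, iteratedDeriv_id, hf₀, hf₁, starlikeQuotient_zero hf₁,
      iteratedDeriv_one, ← iteratedDeriv_succ'] using leibniz 3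
  linear_combination third / 3 - iteratedDeriv 2 f 0 / 2 * second

end StarlikeQuotient

section InverseCoefficients

variable {𝕜 : Type*} [NontriviallyNormedField 𝕜] {f g : 𝕜 → 𝕜} {x : 𝕜}

lemma deriv_eq_one_of_eventually_rightInverse (hf : DifferentiableAt 𝕜 f (g x))
    (hg : DifferentiableAt 𝕜 g x) (hf₁ : deriv f (g x) = 1) (hfg : ∀ᶠ w in 𝓝 x, f (g w) = w) :
    deriv g x = 1 := by
  have hcomp : f ∘ g =ᶠ[𝓝 x] id := hfg
  simpa [deriv_comp x hf hg, hf₁] using hcomp.deriv_eq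

lemma iteratedDeriv_two_of_eventually_rightInverse (hf : ContDiffAt 𝕜 2 f (g x))
    (hg : ContDiffAt 𝕜 2 g x) (hf₁ : deriv f (g x) = 1) (hfg : ∀ᶠ w in 𝓝 x, f (g w) = w) :
    iteratedDeriv 2 g x = -iteratedDeriv 2 f (g x) := by
  have hcomp : f ∘ g =ᶠ[𝓝 x] id := hfg
  have hg₁ : deriv g x = 1 := deriv_eq_one_of_eventually_rightInverse
    (hf.differentiableAt two_ne_zero) (hg.differentiableAt two_ne_zero) hf₁ hfg
  have second : iteratedDeriv 2 f (g x) + iteratedDeriv 2 g x = 0 := by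
    simpa [iteratedDeriv_comp_two hf hg, hf₁, hg₁, iteratedDeriv_id]
      using hcomp.iteratedDeriv_eq 2
  linear_combination second

lemma iteratedDeriv_three_of_eventually_rightInverse (hf : ContDiffAt 𝕜 3 f (g x))
    (hg : ContDiffAt 𝕜 3 g x) (hf₁ : deriv f (g x) = 1) (hfg : ∀ᶠ w in 𝓝 x, f (g w) = w) :
    iteratedDeriv 3 g x = 3 * iteratedDeriv 2 f (g x) ^ 2 - iteratedDeriv 3 f (g x) := by
  have hcomp : f ∘ g =ᶠ[𝓝 x] id := hfg
  have hg₁ : deriv g x = 1 := deriv_eq_one_of_eventually_rightInverse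
    (hf.differentiableAt three_ne_zero) (hg.differentiableAt three_ne_zero) hf₁ hfg
  have hg₂ := iteratedDeriv_two_of_eventually_rightInverse
    (hf.of_le (by norm_num)) (hg.of_le (by norm_num)) hf₁ hfg
  have third : iteratedDeriv 3 f (g x) + 3 * iteratedDeriv 2 f (g x) * iteratedDeriv 2 g x +
      iteratedDeriv 3 g x = 0 := by
    simpa [iteratedDeriv_comp_three hf hg, hf₁, hg₁, iteratedDeriv_id]
      using hcomp.iteratedDeriv_eq 3
  rw [hg₂] at third
  linear_combination third

end InverseCoefficients

section Spirallike

variable {f : ℂ → ℂ} {e : ℂ} {m : ℝ}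

lemma ne_zero_of_le_re_starlike (he : e ≠ 0) (hf : AnalyticOnNhd ℂ f (ball 0 1))
    (hf₁ : deriv f 0 = 1)
    (hre : ∀ z ∈ ball (0 : ℂ) 1, f z ≠ 0 → m ≤ (e * (z * deriv f z / f z)).re)
    {z : ℂ} (hz : z ∈ ball (0 : ℂ) 1) (hz₀ : z ≠ 0) : f z ≠ 0 := by
  have h0 : (0 : ℂ) ∈ ball (0 : ℂ) 1 := mem_ball_self one_pos
  have not_locally_zero : ¬∀ᶠ w in 𝓝 z, f w = 0 := fun hzero ↦ by
    have hf_zero : Set.EqOn f 0 (ball 0 1) := hf.eqOn_zero_of_preconnected_of_eventuallyEq_zero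
      (convex_ball 0 1).isPreconnected hz hzero
    have : f =ᶠ[𝓝 0] fun _ ↦ 0 := hf_zero.eventuallyEq_of_mem (isOpen_ball.mem_nhds h0)
    simp [this.deriv_eq] at hf₁
  have hne : ∀ᶠ w in 𝓝[≠] z, f w ≠ 0 :=
    (hf z hz).eventually_eq_zero_or_eventually_ne_zero.resolve_left not_locally_zero
  refine ne_zero_of_le_re_mul_logDeriv (h := fun w ↦ e * w) (m := m) (hf z hz) not_locally_zero
    (by fun_prop) (mul_ne_zero he hz₀) ?_
  filter_upwards [hne, nhdsWithin_le_nhds (isOpen_ball.mem_nhds hz)] with w hfw hw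
  simpa only [logDeriv_apply, mul_assoc, mul_div_assoc] using hre w hw hfw

theorem norm_two_mul_coeff_three_sub_sq_le (he : e ≠ 0) (hf : AnalyticOnNhd ℂ f (ball 0 1))
    (hf₀ : f 0 = 0) (hf₁ : deriv f 0 = 1)
    (hre : ∀ z ∈ ball (0 : ℂ) 1, f z ≠ 0 → m ≤ (e * (z * deriv f z / f z)).re) :
    ‖e‖ * ‖2 * (iteratedDeriv 3 f 0 / 6) - (iteratedDeriv 2 f 0 / 2) ^ 2‖ ≤ 2 * (e.re - m) := by
  have h0 : (0 : ℂ) ∈ ball (0 : ℂ) 1 := mem_ball_self one_pos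
  have hne (z : ℂ) (hz : z ∈ ball (0 : ℂ) 1) (hz₀ : z ≠ 0) : f z ≠ 0 :=
    ne_zero_of_le_re_starlike he hf hf₁ hre hz hz₀
  have hp : DifferentiableOn ℂ (starlikeQuotient f) (ball 0 1) :=
    differentiableOn_starlikeQuotient isOpen_ball h0 hf.differentiableOn hf₀ hf₁ hne
  have caratheodory := norm_iteratedDeriv_mul_pow_le_of_le_re one_pos (hp.const_mul e)
    two_ne_zero fun z hz hz₀ ↦ by
      simpa only [starlikeQuotient_of_ne_zero hf₀ hz₀] using hre z hz (hne z hz hz₀)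
  rw [iteratedDeriv_const_mul_field, iteratedDeriv_two_starlikeQuotient (hf 0 h0) hf₀ hf₁,
    starlikeQuotient_zero hf₁] at caratheodory
  have factor_two : e * (4 * (iteratedDeriv 3 f 0 / 6) - 2 * (iteratedDeriv 2 f 0 / 2) ^ 2) =
      2 * (e * (2 * (iteratedDeriv 3 f 0 / 6) - (iteratedDeriv 2 f 0 / 2) ^ 2)) := by ring
  rw [factor_two, norm_mul, norm_mul e, Complex.norm_ofNat, mul_one, one_pow, mul_one,
    Nat.factorial_two] at caratheodory
  push_cast at caratheodory
  linarith

end Spirallike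

section CoefficientArithmetic

variable {a₂ a₃ : ℂ} {C : ℝ}

lemma norm_coeff_two_le_sqrt (hf : ‖2 * a₃ - a₂ ^ 2‖ ≤ 2 * C)
    (hg : ‖3 * a₂ ^ 2 - 2 * a₃‖ ≤ 2 * C) : ‖a₂‖ ≤ √(2 * C) := by
  refine Real.le_sqrt_of_sq_le ?_
  have hsum : 2 * ‖a₂‖ ^ 2 = ‖(2 * a₃ - a₂ ^ 2) + (3 * a₂ ^ 2 - 2 * a₃)‖ := by
    rw [show (2 * a₃ - a₂ ^ 2) + (3 * a₂ ^ 2 - 2 * a₃) = 2 * a₂ ^ 2 by ring]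
    simp
  linarith [norm_add_le (2 * a₃ - a₂ ^ 2) (3 * a₂ ^ 2 - 2 * a₃)]

lemma norm_coeff_three_le (hf : ‖2 * a₃ - a₂ ^ 2‖ ≤ 2 * C)
    (hg : ‖3 * a₂ ^ 2 - 2 * a₃‖ ≤ 2 * C) : ‖a₃‖ ≤ 2 * C := by
  have hsum : 4 * ‖a₃‖ = ‖3 * (2 * a₃ - a₂ ^ 2) + (3 * a₂ ^ 2 - 2 * a₃)‖ := by
    rw [show 3 * (2 * a₃ - a₂ ^ 2) + (3 * a₂ ^ 2 - 2 * a₃) = 4 * a₃ by ring]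
    simp
  have htriangle := norm_add_le (3 * (2 * a₃ - a₂ ^ 2)) (3 * a₂ ^ 2 - 2 * a₃)
  rw [norm_mul, Complex.norm_ofNat] at htriangle
  linarith

end CoefficientArithmetic

theorem coeff_bounds_NP_starlike_general
    (α β : ℝ) (f g : ℂ → ℂ)
    (hf_an : AnalyticOnNhd ℂ f (ball 0 1)) (hf0 : f 0 = 0) (hf1 : deriv f 0 = 1)
    (hg_an : AnalyticOnNhd ℂ g (ball 0 1)) (hg0 : g 0 = 0)
    (hfg : ∀ᶠ w in 𝓝 (0 : ℂ), f (g w) = w)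
    (hre_f : ∀ z ∈ ball (0 : ℂ) 1, f z ≠ 0 →
      α * Real.cos β ≤ (Complex.exp (Complex.I * β) * (z * deriv f z / f z)).re)
    (hre_g : ∀ w ∈ ball (0 : ℂ) 1, g w ≠ 0 →
      α * Real.cos β ≤ (Complex.exp (Complex.I * β) * (w * deriv g w / g w)).re) :
    ‖iteratedDeriv 2 f 0 / 2‖ ≤ √(2 * (1 - α) * Real.cos β) ∧
      ‖iteratedDeriv 3 f 0 / 6‖ ≤ 2 * (1 - α) * Real.cos β := by
  have h0 : (0 : ℂ) ∈ ball (0 : ℂ) 1 := mem_ball_self one_pos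
  have hf : AnalyticAt ℂ f (g 0) := by rw [hg0]; exact hf_an 0 h0
  have hf1' : deriv f (g 0) = 1 := by rw [hg0, hf1]
  have hg := hg_an 0 h0
  have hg1 : deriv g 0 = 1 := deriv_eq_one_of_eventually_rightInverse
    hf.differentiableAt hg.differentiableAt hf1' hfg
  have bound_f := norm_two_mul_coeff_three_sub_sq_le (exp_ne_zero _) hf_an hf0 hf1 hre_f
  have bound_g := norm_two_mul_coeff_three_sub_sq_le (exp_ne_zero _) hg_an hg0 hg1 hre_g
  have inverse_coeffs (a₂ a₃ : ℂ) :
      2 * ((3 * a₂ ^ 2 - a₃) / 6) - (-a₂ / 2) ^ 2 = 3 * (a₂ / 2) ^ 2 - 2 * (a₃ / 6) := by ring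
  rw [iteratedDeriv_two_of_eventually_rightInverse hf.contDiffAt hg.contDiffAt hf1' hfg,
    iteratedDeriv_three_of_eventually_rightInverse hf.contDiffAt hg.contDiffAt hf1' hfg,
    hg0, inverse_coeffs] at bound_g
  have order_eq : Real.cos β - α * Real.cos β = (1 - α) * Real.cos β := by ring
  rw [mul_comm I, norm_exp_ofReal_mul_I, exp_ofReal_mul_I_re, one_mul, order_eq]
    at bound_f bound_g
  rw [mul_assoc 2]
  exact ⟨norm_coeff_two_le_sqrt bound_f bound_g, norm_coeff_three_le bound_f bound_g⟩

/-- Coefficient bounds for the class `NP^{0,1}_Σ(β,α)` of bi-starlike-type functions. -/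
theorem coeff_bounds_NP_starlike
    (α β : ℝ) (hα0 : 0 ≤ α) (hα1 : α < 1)
    (hβ : β ∈ Set.Ioo (-(π / 2)) (π / 2))
    (f g : ℂ → ℂ)
    -- `f` is bi-univalent with inverse extension `g`.
    (hf_an : AnalyticOnNhd ℂ f (ball 0 1)) (hf0 : f 0 = 0) (hf1 : deriv f 0 = 1)
    (hf_inj : Set.InjOn f (ball 0 1))
    (hg_an : AnalyticOnNhd ℂ g (ball 0 1)) (hg_inj : Set.InjOn g (ball 0 1))
    (hg0 : g 0 = 0) (hfg : ∀ᶠ w in nhds (0 : ℂ), f (g w) = w)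
    -- real-part condition for `f`
    (hre_f : ∀ z ∈ ball (0 : ℂ) 1, z ≠ 0 →
      α * Real.cos β < (Complex.exp (Complex.I * β) * (z * deriv f z / f z)).re)
    -- real-part condition for `g`
    (hre_g : ∀ w ∈ ball (0 : ℂ) 1, w ≠ 0 →
      α * Real.cos β < (Complex.exp (Complex.I * β) * (w * deriv g w / g w)).re) :
    ‖iteratedDeriv 2 f 0 / 2‖ ≤ Real.sqrt (2 * (1 - α) * Real.cos β) ∧
    ‖iteratedDeriv 3 f 0 / 6‖ ≤ 2 * (1 - α) * Real.cos β :=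
  coeff_bounds_NP_starlike_general α β f g hf_an hf0 hf1 hg_an hg0 hfg
    (fun z hz hfz ↦ (hre_f z hz fun h ↦ hfz (h ▸ hf0)).le)
    (fun w hw hgw ↦ (hre_g w hw fun h ↦ hgw (h ▸ hg0)).le)
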